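/- Let α < 0 be real, β = 0, k ∈ ℝ, c ∈ ℝ with c + 3k² < 0, and φ ∈ [0, 2π). Then the function u(t,x) = √(3(c + 3k²)/α)·e^{iφ}·exp( i·k·(x − (3c + 8k²)·t) )·tanh( √(−(c + 3k²)/2)·(x − c·t) ) (where 3(c + 3k²)/α > 0, so the first square root is the positive real one) is smooth on ℝ×ℝ and satisfies the complex mKdV equation u_t + α·conj(u)·u·u_x + u_xxx = 0 at every point (t,x) ∈ ℝ×ℝ. -/

import Mathlib

/-- Left-hand side of the complex mKdV equation (γ = 1):
`u_t + α·conj(u)·u·u_x + β·u²·conj(u)_x + u_xxx`. -/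
noncomputable def mkdvLHS (α β : ℂ) (u : ℝ → ℝ → ℂ) (t x : ℝ) : ℂ :=
  deriv (fun s => u s x) t
    + α * (starRingEnd ℂ) (u t x) * u t x * deriv (u t) x
    + β * (u t x) ^ 2 * deriv (fun y => (starRingEnd ℂ) (u t y)) x
    + deriv (deriv (deriv (u t))) x

theorem kink_hasDerivAt_tanh (x : ℝ) : HasDerivAt Real.tanh (1 - Real.tanh x ^ 2) x := by
  have hc := (Real.cosh_pos x).ne'
  have h := (Real.hasDerivAt_sinh x).div (Real.hasDerivAt_cosh x) hc
  have he : Real.tanh = Real.sinh / Real.cosh := by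
    funext y; simp [Real.tanh_eq_sinh_div_cosh]
  rw [he]
  refine h.congr_deriv ?_
  simp only [Pi.div_apply]
  field_simp

theorem kink_contDiff_tanh : ContDiff ℝ (⊤ : ℕ∞) Real.tanh := by
  have he : Real.tanh = fun y => Real.sinh y / Real.cosh y := by
    funext y; simp [Real.tanh_eq_sinh_div_cosh]
  rw [he]
  exact Real.contDiff_sinh.div Real.contDiff_cosh (fun y => (Real.cosh_pos y).ne')

theorem kink_hasDerivAt_E (g : ℝ → ℝ) (a x : ℝ) (hg : HasDerivAt g a x) :
    HasDerivAt (fun y => Complex.exp (Complex.I * ((g y : ℝ) : ℂ)))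
      (Complex.I * a * Complex.exp (Complex.I * ((g x : ℝ) : ℂ))) x := by
  have h := (hg.ofReal_comp.const_mul Complex.I).cexp
  convert h using 1
  ring

theorem kink_hasDerivAt_T (g : ℝ → ℝ) (a x : ℝ) (hg : HasDerivAt g a x) :
    HasDerivAt (fun y => ((Real.tanh (g y) : ℝ) : ℂ))
      (a * (1 - ((Real.tanh (g x) : ℝ) : ℂ) ^ 2)) x := by
  have h := ((kink_hasDerivAt_tanh (g x)).comp x hg).ofReal_comp
  refine h.congr_deriv ?_
  push_cast
  ring

theorem kink_poly (D κ b p0 p1 p2 p3 : ℂ) (E T : ℝ → ℂ) (x : ℝ)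
    (hE : HasDerivAt E (κ * E x) x)
    (hT : HasDerivAt T (b * (1 - T x ^ 2)) x) :
    HasDerivAt (fun y => D * E y * (p0 + p1 * T y + p2 * T y ^ 2 + p3 * T y ^ 3))
      (D * E x * (κ * (p0 + p1 * T x + p2 * T x ^ 2 + p3 * T x ^ 3)
        + (p1 + 2 * p2 * T x + 3 * p3 * T x ^ 2) * (b * (1 - T x ^ 2)))) x := by
  have h := (hE.const_mul D).mul
    ((((hT.const_mul p1).const_add p0).add ((hT.pow 2).const_mul p2)).add
      ((hT.pow 3).const_mul p3))
  refine h.congr_deriv ?_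
  simp
  ring

theorem kink_deriv1 (D κ b : ℂ) (E T : ℝ → ℂ) (x : ℝ)
    (hE : HasDerivAt E (κ * E x) x)
    (hT : HasDerivAt T (b * (1 - T x ^ 2)) x) :
    deriv (fun y => D * E y * T y) x = D * E x * (b + κ * T x + (-b) * T x ^ 2 + 0 * T x ^ 3) := by
  have h := (kink_poly D κ b 0 1 0 0 E T x hE hT).deriv
  simp only [zero_add, one_mul, zero_mul, add_zero] at h
  rw [h]; ring

theorem kink_deriv3 (D κ b : ℂ) (E T : ℝ → ℂ)
    (hE : ∀ x, HasDerivAt E (κ * E x) x)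
    (hT : ∀ x, HasDerivAt T (b * (1 - T x ^ 2)) x) (x : ℝ) :
    deriv (deriv (deriv (fun y => D * E y * T y))) x
      = D * E x * (κ ^ 3 * T x + 3 * κ ^ 2 * (b * (1 - T x ^ 2))
          - 6 * κ * b ^ 2 * T x * (1 - T x ^ 2)
          - 2 * b ^ 3 * (1 - 3 * T x ^ 2) * (1 - T x ^ 2)) := by
  have h1 : deriv (fun y => D * E y * T y)
      = fun y => D * E y * (b + κ * T y + (-b) * T y ^ 2 + 0 * T y ^ 3) :=
    funext fun y => kink_deriv1 D κ b E T y (hE y) (hT y)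
  have h2 : deriv (fun y => D * E y * (b + κ * T y + (-b) * T y ^ 2 + 0 * T y ^ 3))
      = fun y => D * E y * ((2 * κ * b) + (κ ^ 2 - 2 * b ^ 2) * T y + (-2 * κ * b) * T y ^ 2
          + (2 * b ^ 2) * T y ^ 3) := by
    funext y
    rw [(kink_poly D κ b _ _ _ _ E T y (hE y) (hT y)).deriv]; ring
  rw [h1, h2, (kink_poly D κ b _ _ _ _ E T x (hE x) (hT x)).deriv]; ring

theorem kink_deriv_t (D κ b : ℂ) (E T : ℝ → ℂ) (x : ℝ)
    (hE : HasDerivAt E (κ * E x) x)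
    (hT : HasDerivAt T (b * (1 - T x ^ 2)) x) :
    deriv (fun y => D * E y * T y) x = D * E x * (κ * T x + b * (1 - T x ^ 2)) := by
  rw [kink_deriv1 D κ b E T x hE hT]; ring

theorem kink_conj (θ : ℝ) :
    (starRingEnd ℂ) (Complex.exp (Complex.I * (θ : ℂ))) * Complex.exp (Complex.I * (θ : ℂ)) = 1 := by
  rw [← Complex.exp_conj, ← Complex.exp_add]
  simp

/-- the tanh kink with linear phase, for `α < 0` real, `β = 0`,
`c + 3k² < 0`. -/
theorem stmt14 (α : ℝ) (hα : α < 0) (k c : ℝ) (hck : c + 3 * k ^ 2 < 0)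
    (φ : ℝ) (hφ : φ ∈ Set.Ico 0 (2 * Real.pi))
    (u : ℝ → ℝ → ℂ)
    (hu : ∀ t x : ℝ, u t x =
      ((Real.sqrt (3 * (c + 3 * k ^ 2) / α) : ℝ) : ℂ)
        * Complex.exp ((φ : ℂ) * Complex.I)
        * Complex.exp (Complex.I * ((k * (x - (3 * c + 8 * k ^ 2) * t) : ℝ) : ℂ))
        * ((Real.tanh (Real.sqrt (-(c + 3 * k ^ 2) / 2) * (x - c * t)) : ℝ) : ℂ)) :
    ContDiff ℝ (⊤ : ℕ∞) (Function.uncurry u)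
      ∧ ∀ t x : ℝ, mkdvLHS (α : ℂ) 0 u t x = 0 := by
  have hum : u = fun t x => ((Real.sqrt (3 * (c + 3 * k ^ 2) / α) : ℝ) : ℂ)
        * Complex.exp ((φ : ℂ) * Complex.I)
        * Complex.exp (Complex.I * ((k * (x - (3 * c + 8 * k ^ 2) * t) : ℝ) : ℂ))
        * ((Real.tanh (Real.sqrt (-(c + 3 * k ^ 2) / 2) * (x - c * t)) : ℝ) : ℂ) := by
    funext t x; exact hu t x
  have hA : (Real.sqrt (3 * (c + 3 * k ^ 2) / α)) ^ 2 * α = 3 * (c + 3 * k ^ 2) := by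
    rw [Real.sq_sqrt (div_nonneg_of_nonpos (by linarith) hα.le)]
    field_simp [hα.ne]
  have hb : (Real.sqrt (-(c + 3 * k ^ 2) / 2)) ^ 2 = -(c + 3 * k ^ 2) / 2 :=
    Real.sq_sqrt (by linarith)
  subst hum
  clear hu
  generalize Real.sqrt (3 * (c + 3 * k ^ 2) / α) = A at *
  generalize Real.sqrt (-(c + 3 * k ^ 2) / 2) = b at *
  constructor
  · have h1 : ContDiff ℝ (⊤ : ℕ∞) (fun p : ℝ × ℝ =>
        ((k * (p.2 - (3 * c + 8 * k ^ 2) * p.1) : ℝ) : ℂ)) :=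
      Complex.ofRealCLM.contDiff.comp
        (contDiff_const.mul (contDiff_snd.sub (contDiff_const.mul contDiff_fst)))
    have h2 : ContDiff ℝ (⊤ : ℕ∞) (fun p : ℝ × ℝ =>
        ((Real.tanh (b * (p.2 - c * p.1)) : ℝ) : ℂ)) :=
      Complex.ofRealCLM.contDiff.comp (kink_contDiff_tanh.comp
        (contDiff_const.mul (contDiff_snd.sub (contDiff_const.mul contDiff_fst))))
    exact (contDiff_const.mul (contDiff_const.mul h1).cexp).mul h2
  · intro t x
    have hEx : ∀ y, HasDerivAt
        (fun y : ℝ => Complex.exp (Complex.I * ((k * (y - (3 * c + 8 * k ^ 2) * t) : ℝ) : ℂ)))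
        ((Complex.I * (k : ℂ)) *
          Complex.exp (Complex.I * ((k * (y - (3 * c + 8 * k ^ 2) * t) : ℝ) : ℂ))) y := fun y =>
      kink_hasDerivAt_E (fun y => k * (y - (3 * c + 8 * k ^ 2) * t)) k y
        (by simpa using ((hasDerivAt_id y).sub_const ((3 * c + 8 * k ^ 2) * t)).const_mul k)
    have hTx : ∀ y, HasDerivAt (fun y : ℝ => ((Real.tanh (b * (y - c * t)) : ℝ) : ℂ))
        ((b : ℂ) * (1 - ((Real.tanh (b * (y - c * t)) : ℝ) : ℂ) ^ 2)) y := fun y =>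
      kink_hasDerivAt_T (fun y => b * (y - c * t)) b y
        (by simpa using ((hasDerivAt_id y).sub_const (c * t)).const_mul b)
    have hEt : HasDerivAt
        (fun s : ℝ => Complex.exp (Complex.I * ((k * (x - (3 * c + 8 * k ^ 2) * s) : ℝ) : ℂ)))
        ((Complex.I * ((-(k * (3 * c + 8 * k ^ 2)) : ℝ) : ℂ)) *
          Complex.exp (Complex.I * ((k * (x - (3 * c + 8 * k ^ 2) * t) : ℝ) : ℂ))) t :=
      kink_hasDerivAt_E (fun s => k * (x - (3 * c + 8 * k ^ 2) * s)) _ t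
        (by simpa using (((hasDerivAt_id t).const_mul (3 * c + 8 * k ^ 2)).const_sub x).const_mul k)
    have hTt : HasDerivAt (fun s : ℝ => ((Real.tanh (b * (x - c * s)) : ℝ) : ℂ))
        (((-(b * c) : ℝ) : ℂ) * (1 - ((Real.tanh (b * (x - c * t)) : ℝ) : ℂ) ^ 2)) t :=
      kink_hasDerivAt_T (fun s => b * (x - c * s)) _ t
        (by simpa using (((hasDerivAt_id t).const_mul c).const_sub x).const_mul b)
    have hcE := kink_conj (k * (x - (3 * c + 8 * k ^ 2) * t))
    have hcφ := kink_conj φ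
    rw [mul_comm Complex.I] at hcφ
    unfold mkdvLHS
    rw [kink_deriv_t _ _ _ _ _ t hEt hTt, kink_deriv3 _ _ _ _ _ hEx hTx x,
      kink_deriv_t _ _ _ _ _ x (hEx x) (hTx x)]
    simp only [map_mul, Complex.conj_ofReal]
    have hA' : (A : ℂ) ^ 2 * α = 3 * (c + 3 * k ^ 2) := by exact_mod_cast hA
    have hb' : (c : ℂ) = -2 * (b : ℂ) ^ 2 - 3 * (k : ℂ) ^ 2 := by
      have : c = -2 * b ^ 2 - 3 * k ^ 2 := by linarith
      exact_mod_cast this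
    generalize ((Real.tanh (b * (x - c * t)) : ℝ) : ℂ) = T at *
    generalize Complex.exp (Complex.I * ((k * (x - (3 * c + 8 * k ^ 2) * t) : ℝ) : ℂ)) = E at *
    generalize Complex.exp ((φ : ℂ) * Complex.I) = F at *
    generalize (starRingEnd ℂ) E = E' at *
    generalize (starRingEnd ℂ) F = F' at *
    have hI := Complex.I_sq
    push_cast
    have key : (α : ℂ) * (A * F' * E' * T) * (A * F * E * T)
        = 3 * (c + 3 * k ^ 2) * T ^ 2 := by
      calc _ = (A ^ 2 * α) * (F' * F) * (E' * E) * T ^ 2 := by ring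
        _ = _ := by rw [hA', hcE, hcφ]; ring
    rw [key, hb']
    linear_combination (A * F * E * (k ^ 3 * Complex.I * T
      + 3 * k ^ 2 * b * (1 - T ^ 2))) * hI
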